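/- arXiv:1801.08056 — 2 statements merged into one kernel-verified Lean document; each statement's English description precedes it below -/
import Mathlib

section
/- For every n ≥ 1, the identity of polynomials in one variable x holds: Σ_{π ∈ B_n} x^{fdes(π)+1} = Σ_{k=0}^{n} C(n,k) · (Σ_{σ ∈ Q_k} x^{fap(σ)}) · (Σ_{σ ∈ Q_{n−k}} x^{2·lap(σ)}), where C(n,k) is the binomial coefficient. -/
open Finset MvPolynomial

/-- Stirling permutations of order `n`, encoded as functions `Fin (2*n) → Fin (n+1)`
in one-line notation (position `i` holds the letter `σ (i) ∈ {1,…,n}`), such that each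
letter `1,…,n` occurs exactly twice and all entries between the two occurrences of a
letter are larger than that letter. -/
def StirlingSet (n : ℕ) : Finset (Fin (2*n) → Fin (n+1)) :=
  Finset.univ.filter (fun σ =>
    (∀ v : Fin (n+1), (v : ℕ) ≠ 0 →
        (Finset.univ.filter (fun i => σ i = v)).card = 2) ∧
    (∀ i j k : Fin (2*n), i < j → j < k → σ i = σ k → σ i < σ j))

/-- The letter at position `i ∈ {1,…,2n}` of a Stirling permutation, with the
convention that positions outside this range (in particular position `0`) hold `0`. -/
def sval {n : ℕ} (σ : Fin (2*n) → Fin (n+1)) (i : ℕ) : ℕ :=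
  if h : 1 ≤ i ∧ i ≤ 2*n then (σ ⟨i - 1, by omega⟩ : ℕ) else 0

/-- The number of ascent-plateaus: indices `2 ≤ i ≤ 2n-1` with `σ_{i-1} < σ_i = σ_{i+1}`. -/
def apQ {n : ℕ} (σ : Fin (2*n) → Fin (n+1)) : ℕ :=
  ((Finset.Icc 2 (2*n - 1)).filter
    (fun i => sval σ (i-1) < sval σ i ∧ sval σ i = sval σ (i+1))).card

/-- The number of left ascent-plateaus: indices `1 ≤ i ≤ 2n-1` with
`σ_{i-1} < σ_i = σ_{i+1}`, where `σ_0 = 0`. -/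
def lapQ {n : ℕ} (σ : Fin (2*n) → Fin (n+1)) : ℕ :=
  ((Finset.Icc 1 (2*n - 1)).filter
    (fun i => sval σ (i-1) < sval σ i ∧ sval σ i = sval σ (i+1))).card

/-- The number of double ascents: indices `1 ≤ i ≤ 2n-1` with
`σ_{i-1} < σ_i < σ_{i+1}`, where `σ_0 = 0`. -/
def dascQ {n : ℕ} (σ : Fin (2*n) → Fin (n+1)) : ℕ :=
  ((Finset.Icc 1 (2*n - 1)).filter
    (fun i => sval σ (i-1) < sval σ i ∧ sval σ i < sval σ (i+1))).card

/-- The number of descent-plateaus: indices `2 ≤ i ≤ 2n-1` with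
`σ_{i-1} > σ_i = σ_{i+1}`. -/
def dpQ {n : ℕ} (σ : Fin (2*n) → Fin (n+1)) : ℕ :=
  ((Finset.Icc 2 (2*n - 1)).filter
    (fun i => sval σ i < sval σ (i-1) ∧ sval σ i = sval σ (i+1))).card

/-- The number of ascents: indices `1 ≤ i ≤ 2n-1` with `σ_i < σ_{i+1}` or `i = 1`. -/
def ascQ {n : ℕ} (σ : Fin (2*n) → Fin (n+1)) : ℕ :=
  ((Finset.Icc 1 (2*n - 1)).filter
    (fun i => sval σ i < sval σ (i+1) ∨ i = 1)).card

/-- The number of plateaus: indices `1 ≤ i ≤ 2n-1` with `σ_i = σ_{i+1}`. -/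
def platQ {n : ℕ} (σ : Fin (2*n) → Fin (n+1)) : ℕ :=
  ((Finset.Icc 1 (2*n - 1)).filter (fun i => sval σ i = sval σ (i+1))).card

/-- The flag ascent-plateau number: `2·ap(σ)+1` if `σ_1 = σ_2`, and `2·ap(σ)` otherwise. -/
def fapQ {n : ℕ} (σ : Fin (2*n) → Fin (n+1)) : ℕ :=
  if 1 ≤ n ∧ sval σ 1 = sval σ 2 then 2 * apQ σ + 1 else 2 * apQ σ

/-- Signed permutations (the hyperoctahedral group `B_n`), encoded as a pair of a
permutation of `Fin n` and a sign vector; the one-line word is recovered by `bval`. -/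
abbrev SignedPerm (n : ℕ) := Equiv.Perm (Fin n) × (Fin n → Bool)

/-- The value `π(i) ∈ ±[n]` of the signed permutation at position `i ∈ {1,…,n}`,
with the convention `π(0) = 0` (and value `0` outside the range). -/
def bval {n : ℕ} (π : SignedPerm n) (i : ℕ) : ℤ :=
  if h : 1 ≤ i ∧ i ≤ n then
    (if π.2 ⟨i - 1, by omega⟩ then -(((π.1 ⟨i - 1, by omega⟩ : ℕ) : ℤ) + 1)
      else ((π.1 ⟨i - 1, by omega⟩ : ℕ) : ℤ) + 1)
  else 0

/-- The type-A descent number of a signed permutation: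
`#{i ∈ [n-1] : π(i) > π(i+1)}`. -/
def desA {n : ℕ} (π : SignedPerm n) : ℕ :=
  ((Finset.Icc 1 (n - 1)).filter (fun i => bval π (i+1) < bval π i)).card

/-- The type-B descent number of a signed permutation:
`#{i ∈ {0,1,…,n-1} : π(i) > π(i+1)}` with `π(0) = 0`. -/
def desB {n : ℕ} (π : SignedPerm n) : ℕ :=
  ((Finset.range n).filter (fun i => bval π (i+1) < bval π i)).card

/-- The flag descent number: `2·des_A(π)+1` if `π(1) < 0`, and `2·des_A(π)` otherwise. -/
def fdes {n : ℕ} (π : SignedPerm n) : ℕ :=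
  if bval π 1 < 0 then 2 * desA π + 1 else 2 * desA π

/-! Every word is weighted by a product of labels, one for each slot in which the next, larger
letter may be inserted, chosen so that each insertion rewrites labels by the same context-free
grammar `x → x y²`, `y → x² y`, `z → x y z`. Letting the derivation `D` given by this grammar act
on a weight therefore sums the weights of all words obtained by an insertion. Hence `Dⁿ y`
enumerates the Stirling permutations of order `n` by left ascent-plateaus, `Dⁿ z` enumerates them
by flag ascent-plateaus, and `Dⁿ (z y)` enumerates the signed permutations by flag descents. The
identity is the Leibniz rule for `Dⁿ (z y)` at `y = z = 1`. -/

theorem iterate_derivation_mul {R A : Type*} [CommSemiring R] [CommSemiring A] [Algebra R A]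
    (D : Derivation R A A) (n : ℕ) (a b : A) :
    D^[n] (a * b) =
      ∑ ij ∈ antidiagonal n, (n.choose ij.1 : A) * (D^[ij.1] a * D^[ij.2] b) := by
  induction n with
  | zero => simp
  | succ n ih =>
    rw [sum_antidiagonal_choose_succ_mul fun i j => D^[i] a * D^[j] b,
      Function.iterate_succ_apply', ih, map_sum, ← sum_add_distrib]
    refine sum_congr rfl fun ij hij => ?_
    rw [← n.choose_symm_of_eq_add (mem_antidiagonal.mp hij).symm, ← nsmul_eq_mul, map_nsmul,
      D.leibniz, Function.iterate_succ_apply', Function.iterate_succ_apply']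
    simp only [smul_eq_mul, nsmul_eq_mul]
    ring

section SlotGrammar

/-- The variables of the grammar. In the weight of a word every slot between two letters, before
the first letter or after the last one carries a label: `x` marks a slot that contributes to the
exponent of the statistic, `y` one that does not, and `z` one exceptional slot near the front. -/
inductive SlotLabel
  | x
  | y
  | z

open SlotLabel

/-- The context-free grammar `x → x y²`, `y → x² y`, `z → x y z`, as a derivation. -/
noncomputable def slotDerivation :
    Derivation ℤ (MvPolynomial SlotLabel ℤ) (MvPolynomial SlotLabel ℤ) :=
  mkDerivation ℤ fun
    | x => X x * X y ^ 2
    | y => X x ^ 2 * X y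
    | z => X x * X y * X z

theorem slotDerivation_x : slotDerivation (X x) = X x * X y ^ 2 :=
  mkDerivation_X ..

theorem slotDerivation_y : slotDerivation (X y) = X x ^ 2 * X y :=
  mkDerivation_X ..

theorem slotDerivation_z : slotDerivation (X z) = X x * X y * X z :=
  mkDerivation_X ..

/-- The specialization `x ↦ X`, `y ↦ 1`, `z ↦ 1`, which turns a weight into a power of `X`. -/
noncomputable def evalSlots : MvPolynomial SlotLabel ℤ →ₐ[ℤ] Polynomial ℤ :=
  aeval fun
    | x => Polynomial.X
    | y => 1
    | z => 1

theorem evalSlots_x : evalSlots (X x) = Polynomial.X :=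
  aeval_X ..

theorem evalSlots_y : evalSlots (X y) = 1 :=
  aeval_X ..

theorem evalSlots_z : evalSlots (X z) = 1 :=
  aeval_X ..

end SlotGrammar

section StirlingWeights

variable {α : Type*}

open SlotLabel

/-- `l` with two adjacent copies of `N` inserted after its first `p` letters. -/
def insertPair (l : List α) (p : ℕ) (N : α) : List α :=
  l.take p ++ N :: N :: l.drop p

theorem insertPair_zero (l : List α) (N : α) : insertPair l 0 N = N :: N :: l :=
  rfl

theorem insertPair_cons_succ (a : α) (l : List α) (p : ℕ) (N : α) :
    insertPair (a :: l) (p + 1) N = a :: insertPair l p N :=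
  rfl

variable [LinearOrder α]

/-- The product of the slot labels of the word `l` read after the letter `a`: the two slots adjacent
to the first letter of a left ascent-plateau are labelled `x`, all other slots `y`. -/
noncomputable def lapWeight : α → List α → MvPolynomial SlotLabel ℤ
  | _, [] => X y
  | _, [_] => X y * X y
  | a, b :: c :: l =>
    if a < b ∧ b = c then X x * X x * lapWeight c l else X y * lapWeight b (c :: l)

theorem lapWeight_nil (a : α) : lapWeight a [] = X y := by
  rw [lapWeight]

theorem lapWeight_singleton (a b : α) : lapWeight a [b] = X y * X y := by
  rw [lapWeight]

theorem lapWeight_plateau {a b : α} (h : a < b) (l : List α) :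
    lapWeight a (b :: b :: l) = X x * X x * lapWeight b l := by
  rw [lapWeight, if_pos ⟨h, rfl⟩]

theorem lapWeight_cons_of_ne {a b c : α} (h : b ≠ c) (l : List α) :
    lapWeight a (b :: c :: l) = X y * lapWeight b (c :: l) := by
  rw [lapWeight, if_neg fun hc => h hc.2]

theorem lapWeight_cons_of_le {a b : α} (h : b ≤ a) (l : List α) :
    lapWeight a (b :: l) = X y * lapWeight b l := by
  cases l with
  | nil => simp only [lapWeight]
  | cons c l => rw [lapWeight, if_neg fun hc => h.not_gt hc.1]

theorem slotDerivation_lapWeight {N : α} (a : α) (l : List α) (ha : a < N)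
    (hl : ∀ b ∈ l, b < N) :
    slotDerivation (lapWeight a l) =
      ∑ p ∈ range (l.length + 1), lapWeight a (insertPair l p N) := by
  fun_induction lapWeight a l with
  | case1 a =>
    simp only [List.length_nil, zero_add, range_one, sum_singleton, insertPair_zero,
      lapWeight_plateau ha, lapWeight_nil, slotDerivation_y]
    ring
  | case2 a b =>
    have hb : b < N := hl b (by simp)
    simp only [List.length_singleton, sum_range_succ, range_zero, sum_empty, insertPair_zero,
      insertPair_cons_succ, lapWeight_plateau ha, lapWeight_plateau hb,
      lapWeight_cons_of_ne hb.ne, lapWeight_nil, lapWeight_singleton, Derivation.leibniz,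
      slotDerivation_y, smul_eq_mul]
    ring
  | case3 a b c l h ih =>
    obtain ⟨hab, rfl⟩ := h
    have hb : b < N := hl b (by simp)
    have ih := ih hb fun d hd => hl d (by simp [hd])
    simp only [List.length_cons, sum_range_succ' _ (l.length + 1 + 1),
      sum_range_succ' _ (l.length + 1), insertPair_zero,
      insertPair_cons_succ, lapWeight_plateau ha, lapWeight_plateau hb, lapWeight_plateau hab,
      lapWeight_cons_of_ne hb.ne, lapWeight_cons_of_le hb.le, lapWeight_cons_of_le le_rfl,
      Derivation.leibniz, slotDerivation_x, smul_eq_mul, ← mul_sum, ih]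
    ring
  | case4 a b c l h ih =>
    have hb : b < N := hl b (by simp)
    have ih := ih hb fun d hd => hl d (by simp only [List.mem_cons] at hd ⊢; tauto)
    have hstep (p : ℕ) : lapWeight a (b :: insertPair (c :: l) p N) =
        X y * lapWeight b (insertPair (c :: l) p N) := by
      cases p with
      | zero => exact lapWeight_cons_of_ne hb.ne _
      | succ p => rw [insertPair_cons_succ, lapWeight, if_neg h]
    have hfront : lapWeight a (insertPair (b :: c :: l) 0 N) =
        X x * X x * (X y * lapWeight b (c :: l)) := by
      rw [insertPair_zero, lapWeight_plateau ha, lapWeight_cons_of_le hb.le]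
    rw [List.length_cons, sum_range_succ', hfront, Derivation.leibniz, ih]
    simp only [insertPair_cons_succ, hstep, ← mul_sum, slotDerivation_y, smul_eq_mul]
    ring

/-- The product of the slot labels of a word: as in `lapWeight`, except that slots `0` and `1` are
labelled `x` and `z` if the word starts with a plateau, and slot `0` is labelled `z` otherwise. -/
noncomputable def fapWeight : List α → MvPolynomial SlotLabel ℤ
  | [] => X z
  | [b] => X z * lapWeight b []
  | b :: c :: l => if b = c then X x * X z * lapWeight c l else X z * lapWeight b (c :: l)

theorem fapWeight_cons_of_ne {b c : α} (h : b ≠ c) (l : List α) :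
    fapWeight (b :: c :: l) = X z * lapWeight b (c :: l) := by
  rw [fapWeight, if_neg h]

theorem fapWeight_plateau (b : α) (l : List α) :
    fapWeight (b :: b :: l) = X x * X z * lapWeight b l := by
  rw [fapWeight, if_pos rfl]

theorem slotDerivation_z_mul_lapWeight {N : α} (b : α) (l : List α) (hb : b < N)
    (hl : ∀ c ∈ l, c < N) :
    slotDerivation (X z * lapWeight b l) =
      ∑ p ∈ range (l.length + 1), X z * lapWeight b (insertPair l p N) +
        X x * X z * (X y * lapWeight b l) := by
  rw [← mul_sum, ← slotDerivation_lapWeight b l hb hl, Derivation.leibniz, slotDerivation_z]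
  simp only [smul_eq_mul]
  ring

theorem slotDerivation_fapWeight {N : α} (l : List α) (hl : ∀ b ∈ l, b < N) :
    slotDerivation (fapWeight l) =
      ∑ p ∈ range (l.length + 1), fapWeight (insertPair l p N) := by
  match l with
  | [] =>
    rw [fapWeight, slotDerivation_z, List.length_nil, zero_add, range_one, sum_singleton,
      insertPair_zero, fapWeight_plateau, lapWeight_nil]
    ring
  | [b] =>
    have hb : b < N := hl b (by simp)
    rw [fapWeight, slotDerivation_z_mul_lapWeight b [] hb (by simp)]
    simp only [List.length_nil, List.length_singleton, sum_range_succ, range_zero, sum_empty,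
      insertPair_zero, insertPair_cons_succ, fapWeight_plateau, fapWeight_cons_of_ne hb.ne,
      lapWeight_cons_of_le hb.le]
    ring
  | b :: c :: l =>
    have hb : b < N := hl b (by simp)
    by_cases h : b = c
    · subst h
      have hlap := slotDerivation_lapWeight b l hb fun d hd => hl d (by simp [hd])
      simp only [List.length_cons, sum_range_succ' _ (l.length + 1 + 1),
        sum_range_succ' _ (l.length + 1), insertPair_zero, insertPair_cons_succ, fapWeight_plateau,
        fapWeight_cons_of_ne hb.ne, lapWeight_cons_of_le hb.le, lapWeight_cons_of_le le_rfl,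
        lapWeight_plateau hb, ← mul_sum, Derivation.leibniz, slotDerivation_x, slotDerivation_z,
        smul_eq_mul, hlap]
      ring
    · have hstep (p : ℕ) : fapWeight (b :: insertPair (c :: l) p N) =
          X z * lapWeight b (insertPair (c :: l) p N) := by
        cases p with
        | zero => exact fapWeight_cons_of_ne hb.ne _
        | succ p => exact fapWeight_cons_of_ne h _
      rw [fapWeight_cons_of_ne h, List.length_cons, sum_range_succ', insertPair_zero,
        fapWeight_plateau, lapWeight_cons_of_le hb.le,
        slotDerivation_z_mul_lapWeight b (c :: l) hb fun d hd => hl d (List.mem_cons_of_mem b hd)]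
      simp only [insertPair_cons_succ, hstep]

/-- The number of left ascent-plateaus of the word `l` read after the letter `a`. -/
def leftAscentPlateaus : α → List α → ℕ
  | a, b :: c :: l => (if a < b ∧ b = c then 1 else 0) + leftAscentPlateaus b (c :: l)
  | _, _ => 0

theorem leftAscentPlateaus_cons_self (a : α) (l : List α) :
    leftAscentPlateaus a (a :: l) = leftAscentPlateaus a l := by
  cases l with
  | nil => simp only [leftAscentPlateaus]
  | cons b l => rw [leftAscentPlateaus, if_neg fun h => h.1.false, zero_add]

theorem evalSlots_lapWeight (a : α) (l : List α) :
    evalSlots (lapWeight a l) = Polynomial.X ^ (2 * leftAscentPlateaus a l) := by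
  fun_induction lapWeight a l with
  | case1 a => simp [leftAscentPlateaus, evalSlots_y]
  | case2 a b => simp [leftAscentPlateaus, evalSlots_y]
  | case3 a b c l h ih =>
    obtain ⟨hab, rfl⟩ := h
    rw [map_mul, map_mul, evalSlots_x, ih, leftAscentPlateaus, if_pos ⟨hab, rfl⟩,
      leftAscentPlateaus_cons_self]
    ring
  | case4 a b c l h ih =>
    rw [map_mul, evalSlots_y, ih, leftAscentPlateaus, if_neg h, one_mul, zero_add]

theorem evalSlots_fapWeight_cons_cons (b c : α) (l : List α) :
    evalSlots (fapWeight (b :: c :: l)) =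
      Polynomial.X ^ (2 * leftAscentPlateaus b (c :: l) + if b = c then 1 else 0) := by
  rw [fapWeight]
  split_ifs with h
  · subst h
    rw [map_mul, map_mul, evalSlots_x, evalSlots_z, evalSlots_lapWeight,
      leftAscentPlateaus_cons_self]
    ring
  · rw [map_mul, evalSlots_z, evalSlots_lapWeight, one_mul, add_zero]

end StirlingWeights

section SignedWeights

open SlotLabel

variable {α : Type*} [LinearOrder α]

/-- The product of the slot labels of the word `l` read after the letter `a`: the slot in a descent
is labelled `x²`, the slot in an ascent `y²`, and the final slot `x y`. -/
noncomputable def desWeight : α → List α → MvPolynomial SlotLabel ℤ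
  | _, [] => X x * X y
  | a, b :: l => (if b < a then X x ^ 2 else X y ^ 2) * desWeight b l

theorem desWeight_cons_of_lt {a b : α} (h : b < a) (l : List α) :
    desWeight a (b :: l) = X x ^ 2 * desWeight b l := by
  rw [desWeight, if_pos h]

theorem desWeight_cons_of_le {a b : α} (h : a ≤ b) (l : List α) :
    desWeight a (b :: l) = X y ^ 2 * desWeight b l := by
  rw [desWeight, if_neg h.not_gt]

theorem slotDerivation_desWeight {lo hi : α} (a : α) (l : List α) (ha : a ∈ Set.Ioo lo hi)
    (hl : ∀ b ∈ l, b ∈ Set.Ioo lo hi) :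
    slotDerivation (desWeight a l) =
      ∑ p ∈ range (l.length + 1),
        (desWeight a (l.insertIdx p hi) + desWeight a (l.insertIdx p lo)) := by
  have ⟨hlo, hhi⟩ := ha
  induction l generalizing a with
  | nil =>
    simp only [List.length_nil, zero_add, range_one, sum_singleton, List.insertIdx_zero,
      desWeight_cons_of_lt hlo, desWeight_cons_of_le hhi.le, desWeight, Derivation.leibniz,
      slotDerivation_x, slotDerivation_y, smul_eq_mul]
    ring
  | cons b l ih =>
    have hb := hl b (by simp)
    have ih := ih b hb (fun c hc => hl c (by simp [hc])) hb.1 hb.2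
    have hlabel : slotDerivation (if b < a then X x ^ 2 else X y ^ 2) =
        2 * X x ^ 2 * X y ^ 2 := by
      split_ifs <;>
        simp only [Derivation.leibniz_pow, slotDerivation_x, slotDerivation_y, nsmul_eq_mul,
          smul_eq_mul] <;>
        push_cast <;> ring
    have hfront : desWeight a ((b :: l).insertIdx 0 hi) + desWeight a ((b :: l).insertIdx 0 lo) =
        2 * X x ^ 2 * X y ^ 2 * desWeight b l := by
      rw [List.insertIdx_zero, List.insertIdx_zero, desWeight_cons_of_le hhi.le,
        desWeight_cons_of_lt hb.2, desWeight_cons_of_lt hlo, desWeight_cons_of_le hb.1.le]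
      ring
    rw [List.length_cons, sum_range_succ', hfront, desWeight, Derivation.leibniz, ih, hlabel]
    simp only [List.insertIdx_succ_cons, desWeight, ← mul_add, ← mul_sum, smul_eq_mul]
    ring

/-- The product of the slot labels of the word `l`: as in `desWeight`, except that the slot in front
of the first letter `a` is labelled `z x` if `a < 0` and `z y` otherwise. -/
noncomputable def fdesWeight [Zero α] : List α → MvPolynomial SlotLabel ℤ
  | [] => X z * X y
  | a :: l => X z * (if a < 0 then X x else X y) * desWeight a l

theorem slotDerivation_fdesWeight [Zero α] {lo hi : α} (l : List α) (h0 : (0 : α) ∈ Set.Ioo lo hi)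
    (hl : ∀ b ∈ l, b ∈ Set.Ioo lo hi) :
    slotDerivation (fdesWeight l) =
      ∑ p ∈ range (l.length + 1),
        (fdesWeight (l.insertIdx p hi) + fdesWeight (l.insertIdx p lo)) := by
  have ⟨hlo, hhi⟩ := h0
  cases l with
  | nil =>
    simp only [List.length_nil, zero_add, range_one, sum_singleton, List.insertIdx_zero,
      fdesWeight, desWeight, if_neg hhi.not_gt, if_pos hlo, Derivation.leibniz, slotDerivation_y,
      slotDerivation_z, smul_eq_mul]
    ring
  | cons a l =>
    have ha := hl a (by simp)
    have hdes := slotDerivation_desWeight a l ha fun b hb => hl b (List.mem_cons_of_mem a hb)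
    have hlabel : slotDerivation (X z * if a < 0 then X x else X y) =
        X z * (X x ^ 2 * X y + X x * X y ^ 2) := by
      split_ifs <;>
        simp only [Derivation.leibniz, slotDerivation_x, slotDerivation_y, slotDerivation_z,
          smul_eq_mul] <;>
        ring
    have hfront : fdesWeight ((a :: l).insertIdx 0 hi) + fdesWeight ((a :: l).insertIdx 0 lo) =
        X z * (X x ^ 2 * X y + X x * X y ^ 2) * desWeight a l := by
      rw [List.insertIdx_zero, List.insertIdx_zero, fdesWeight, fdesWeight, if_neg hhi.not_gt,
        if_pos hlo, desWeight_cons_of_lt ha.2, desWeight_cons_of_le ha.1.le]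
      ring
    rw [List.length_cons, sum_range_succ', hfront, fdesWeight, Derivation.leibniz, hdes, hlabel]
    simp only [List.insertIdx_succ_cons, fdesWeight, ← mul_add, ← mul_sum, smul_eq_mul]
    ring

/-- The number of descents of the word `l` read after the letter `a`. -/
def descents : α → List α → ℕ
  | _, [] => 0
  | a, b :: l => (if b < a then 1 else 0) + descents b l

theorem evalSlots_desWeight (a : α) (l : List α) :
    evalSlots (desWeight a l) = Polynomial.X ^ (2 * descents a l + 1) := by
  induction l generalizing a with
  | nil => simp [desWeight, descents, evalSlots_x, evalSlots_y]
  | cons b l ih =>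
    rw [desWeight, map_mul, ih, descents]
    split_ifs
    · rw [map_pow, evalSlots_x]
      ring
    · rw [map_pow, evalSlots_y]
      ring

end SignedWeights

section Statistics

variable {α : Type*} [LinearOrder α]

theorem card_filter_Ico_succ (P : ℕ → Prop) [DecidablePred P] {m n : ℕ} (h : m < n) :
    #{i ∈ Ico m n | P i} = (if P m then 1 else 0) + #{i ∈ Ico (m + 1) n | P i} := by
  rw [card_filter, card_filter, sum_eq_sum_Ico_succ_bot h]

theorem leftAscentPlateaus_map_range' (f : ℕ → α) (k m : ℕ) :
    leftAscentPlateaus (f k) ((List.range' (k + 1) m).map f) =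
      #{i ∈ Ico (k + 1) (k + m) | f (i - 1) < f i ∧ f i = f (i + 1)} := by
  induction m generalizing k with
  | zero => simp [leftAscentPlateaus]
  | succ m ih =>
    cases m with
    | zero => simp [leftAscentPlateaus]
    | succ m =>
      have ih := ih (k + 1)
      simp only [List.range'_succ, List.map_cons] at ih ⊢
      rw [leftAscentPlateaus, ih, Nat.add_right_comm k 1 (m + 1), add_assoc k (m + 1),
        card_filter_Ico_succ _ (show k + 1 < k + (m + 1 + 1) by omega), Nat.add_sub_cancel]

theorem descents_map_range' (f : ℕ → α) (k m : ℕ) :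
    descents (f k) ((List.range' (k + 1) m).map f) =
      #{i ∈ Ico k (k + m) | f (i + 1) < f i} := by
  induction m generalizing k with
  | zero => simp [descents]
  | succ m ih =>
    rw [List.range'_succ, List.map_cons, descents, ih, Nat.add_right_comm k 1 m, add_assoc k m,
      card_filter_Ico_succ _ (show k < k + (m + 1) by omega)]

end Statistics

section StirlingWords

/-- The Stirling permutations of order `n` as lists of letters. -/
structure IsStirlingWord (n : ℕ) (l : List ℕ) : Prop where
  coe_eq : (l : Multiset ℕ) = 2 • (Icc 1 n).val
  triplewise : l.Triplewise fun a b c => a = c → a < b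

theorem IsStirlingWord.length_eq {n : ℕ} {l : List ℕ} (hl : IsStirlingWord n l) :
    l.length = 2 * n := by
  rw [← Multiset.coe_card, hl.coe_eq, Multiset.card_nsmul, card_val, Nat.card_Icc,
    Nat.add_sub_cancel]

theorem IsStirlingWord.mem_Icc {n a : ℕ} {l : List ℕ} (hl : IsStirlingWord n l) (ha : a ∈ l) :
    a ∈ Icc 1 n := by
  rw [← Multiset.mem_coe, hl.coe_eq] at ha
  exact Multiset.mem_of_mem_nsmul ha

theorem IsStirlingWord.lt_succ {n a : ℕ} {l : List ℕ} (hl : IsStirlingWord n l) (ha : a ∈ l) :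
    a < n + 1 :=
  Nat.lt_succ_of_le (Finset.mem_Icc.mp (hl.mem_Icc ha)).2

theorem coe_insertPair {α : Type*} (l : List α) (p : ℕ) (N : α) :
    (insertPair l p N : Multiset α) = N ::ₘ N ::ₘ l := by
  rw [Multiset.cons_coe, Multiset.cons_coe, Multiset.coe_eq_coe]
  refine (List.perm_middle.trans (List.perm_middle.cons N)).trans ?_
  rw [List.take_append_drop]

theorem two_nsmul_Icc_succ_val (n : ℕ) :
    2 • (Icc 1 (n + 1)).val = (n + 1) ::ₘ (n + 1) ::ₘ 2 • (Icc 1 n).val := by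
  rw [← insert_Icc_right_eq_Icc_add_one (Nat.le_add_left 1 n), insert_val_of_notMem (by simp),
    two_nsmul, two_nsmul, Multiset.cons_add, Multiset.add_cons]

theorem triplewise_insertPair_iff {α : Type*} [LinearOrder α] {l : List α} {N : α} (p : ℕ)
    (hl : ∀ a ∈ l, a < N) :
    (insertPair l p N).Triplewise (fun a b c => a = c → a < b) ↔
      l.Triplewise fun a b c => a = c → a < b := by
  obtain ⟨u, v, rfl, h⟩ : ∃ u v, l = u ++ v ∧ insertPair l p N = u ++ N :: N :: v :=
    ⟨l.take p, l.drop p, (List.take_append_drop p l).symm, rfl⟩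
  have hu (a) (ha : a ∈ u) : a < N := hl a (List.mem_append_left v ha)
  have hv (a) (ha : a ∈ v) : a < N := hl a (List.mem_append_right u ha)
  rw [h]
  simp only [List.triplewise_append, List.triplewise_cons, List.pairwise_cons, List.mem_cons]
  have hNv : v.Pairwise fun b c => N = c → N < b :=
    List.pairwise_of_forall_mem_list fun b _ c hc h => ((hv c hc).ne' h).elim
  have huN : u.Pairwise fun a b => a = N → a < b :=
    List.pairwise_of_forall_mem_list fun a ha b _ h => ((hu a ha).ne h).elim
  grind

theorem isStirlingWord_insertPair_iff {n : ℕ} {l : List ℕ} (p : ℕ) (hl : ∀ a ∈ l, a < n + 1) :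
    IsStirlingWord (n + 1) (insertPair l p (n + 1)) ↔ IsStirlingWord n l := by
  have hcoe : (insertPair l p (n + 1) : Multiset ℕ) = 2 • (Icc 1 (n + 1)).val ↔
      (l : Multiset ℕ) = 2 • (Icc 1 n).val := by
    rw [coe_insertPair, two_nsmul_Icc_succ_val, Multiset.cons_inj_right, Multiset.cons_inj_right]
  exact ⟨fun h => ⟨hcoe.mp h.coe_eq, (triplewise_insertPair_iff p hl).mp h.triplewise⟩,
    fun h => ⟨hcoe.mpr h.coe_eq, (triplewise_insertPair_iff p hl).mpr h.triplewise⟩⟩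

theorem insertPair_inj {α : Type*} {l l' : List α} {p p' : ℕ} {N : α}
    (hl : N ∉ l) (hl' : N ∉ l') (hp : p ≤ l.length) (hp' : p' ≤ l'.length) :
    insertPair l p N = insertPair l' p' N ↔ l = l' ∧ p = p' := by
  classical
  have hidx {l : List α} {p : ℕ} (hl : N ∉ l) (hp : p ≤ l.length) :
      (insertPair l p N).idxOf N = p := by
    rw [insertPair, List.idxOf_append_of_notMem fun h => hl (List.mem_of_mem_take h),
      List.idxOf_cons_self, List.length_take_of_le hp, add_zero]
  have hfilter {l : List α} {p : ℕ} (hl : N ∉ l) :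
      (insertPair l p N).filter (· ≠ N) = l := by
    rw [insertPair, List.filter_append, List.filter_cons_of_neg (by simp),
      List.filter_cons_of_neg (by simp), ← List.filter_append, List.take_append_drop,
      List.filter_eq_self]
    exact fun a ha => decide_eq_true (ne_of_mem_of_not_mem ha hl)
  constructor
  · intro h
    exact ⟨by rw [← hfilter hl, h, hfilter hl'], by rw [← hidx hl hp, h, hidx hl' hp']⟩
  · rintro ⟨rfl, rfl⟩
    rfl

theorem exists_eq_insertPair_of_count_eq_two {α : Type*} [LinearOrder α] {l : List α} {N : α}
    (hl : l.Triplewise fun a b c => a = c → a < b) (hN : ∀ a ∈ l, a ≤ N) (hcount : l.count N = 2) :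
    ∃ l' p, (∀ a ∈ l', a < N) ∧ p ≤ l'.length ∧ l = insertPair l' p N := by
  obtain ⟨u, w, rfl, hu⟩ := List.eq_append_cons_of_mem
    (List.count_pos_iff.mp (by rw [hcount]; exact two_pos) : N ∈ l)
  rw [List.count_append, List.count_eq_zero_of_not_mem hu, List.count_cons_self] at hcount
  obtain ⟨m, v, rfl, hm⟩ := List.eq_append_cons_of_mem
    (List.count_pos_iff.mp (by omega) : N ∈ w)
  rw [List.count_append, List.count_eq_zero_of_not_mem hm, List.count_cons_self] at hcount
  have hv : N ∉ v := List.count_eq_zero.mp (by omega)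
  -- A letter between the two copies of `N` would have to exceed `N`.
  obtain rfl : m = [] := by
    refine List.eq_nil_iff_forall_not_mem.mpr fun b hb => ?_
    have hpair := (List.triplewise_cons.mp (List.triplewise_append.mp hl).2.1).1
    have hNb := (List.pairwise_append.mp hpair).2.2 b hb N List.mem_cons_self rfl
    exact hNb.not_ge (hN b (by simp [hb]))
  refine ⟨u ++ v, u.length, fun a ha => ?_, by simp, ?_⟩
  · have ha_ne : a ≠ N := ne_of_mem_of_not_mem ha (by simp [hu, hv])
    exact (hN a (by simp_all)).lt_of_ne ha_ne
  · rw [insertPair, List.take_left, List.drop_left, List.nil_append]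

theorem IsStirlingWord.exists_eq_insertPair {n : ℕ} {l : List ℕ} (hl : IsStirlingWord (n + 1) l) :
    ∃ l' p, IsStirlingWord n l' ∧ p ≤ l'.length ∧ l = insertPair l' p (n + 1) := by
  have hcount : l.count (n + 1) = 2 := by
    rw [← Multiset.coe_count, hl.coe_eq, Multiset.count_nsmul,
      Multiset.count_eq_one_of_mem (Icc 1 (n + 1)).nodup (by simp)]
  obtain ⟨l', p, hl', hp, rfl⟩ := exists_eq_insertPair_of_count_eq_two hl.triplewise
    (fun a ha => Nat.le_of_lt_succ (hl.lt_succ ha)) hcount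
  exact ⟨l', p, (isStirlingWord_insertPair_iff p hl').mp hl, hp, rfl⟩

/-- The one-line notation of `σ` as a list. -/
def stirlingWord {n : ℕ} (σ : Fin (2 * n) → Fin (n + 1)) : List ℕ :=
  List.ofFn fun i => (σ i : ℕ)

theorem stirlingWord_injective (n : ℕ) :
    Function.Injective (stirlingWord : (Fin (2 * n) → Fin (n + 1)) → List ℕ) := fun _ _ h =>
  funext fun i => Fin.ext (congrFun (List.ofFn_injective h) i)

theorem count_stirlingWord {n : ℕ} (σ : Fin (2 * n) → Fin (n + 1)) (v : Fin (n + 1)) :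
    (stirlingWord σ).count (v : ℕ) = #{i | σ i = v} := by
  have hmap : (stirlingWord σ : Multiset ℕ) = univ.val.map fun i => (σ i : ℕ) := by
    rw [stirlingWord, Fin.univ_val_map]
  rw [← Multiset.coe_count, hmap, Multiset.count_map, ← filter_val, card_val]
  simp only [Fin.ext_iff, eq_comm]

theorem coe_stirlingWord_eq_iff {n : ℕ} (σ : Fin (2 * n) → Fin (n + 1)) :
    (stirlingWord σ : Multiset ℕ) = 2 • (Icc 1 n).val ↔
      ∀ v : Fin (n + 1), (v : ℕ) ≠ 0 → #{i | σ i = v} = 2 := by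
  have hcount {v : ℕ} (hv : v ∈ Icc 1 n) : Multiset.count v (2 • (Icc 1 n).val) = 2 := by
    rw [Multiset.count_nsmul, Multiset.count_eq_one_of_mem (Icc 1 n).nodup hv]
  constructor
  · intro h v hv
    rw [← count_stirlingWord, ← Multiset.coe_count, h, hcount (by simp; omega)]
  · intro h
    refine (Multiset.eq_of_le_of_card_le (Multiset.le_iff_count.mpr fun v => ?_) ?_).symm
    · by_cases hv : v ∈ Icc 1 n
      · obtain ⟨hv1, hvn⟩ := Finset.mem_Icc.mp hv
        rw [hcount hv, Multiset.coe_count,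
          count_stirlingWord σ ⟨v, Nat.lt_succ_of_le hvn⟩, h _ (by simp; omega)]
      · rw [Multiset.count_nsmul, Multiset.count_eq_zero_of_notMem (mt mem_val.mp hv)]
        exact Nat.zero_le _
    · simp [stirlingWord]

theorem triplewise_ofFn {α : Type*} {n : ℕ} {f : Fin n → α} {p : α → α → α → Prop} :
    (List.ofFn f).Triplewise p ↔ ∀ i j k, i < j → j < k → p (f i) (f j) (f k) := by
  rw [List.triplewise_iff_getElem]
  simp only [List.getElem_ofFn, List.length_ofFn]
  exact ⟨fun h i j k hij hjk => h i j k hij hjk k.2, fun h i j k hij hjk hk =>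
    h ⟨i, by omega⟩ ⟨j, by omega⟩ ⟨k, hk⟩ hij hjk⟩

theorem isStirlingWord_stirlingWord_iff {n : ℕ} {σ : Fin (2 * n) → Fin (n + 1)} :
    IsStirlingWord n (stirlingWord σ) ↔ σ ∈ StirlingSet n := by
  rw [StirlingSet, mem_filter_univ, ← coe_stirlingWord_eq_iff]
  have htriple := triplewise_ofFn (f := fun i => (σ i : ℕ)) (p := fun a b c => a = c → a < b)
  simp only [← Fin.ext_iff, ← Fin.lt_def] at htriple
  exact ⟨fun h => ⟨h.coe_eq, htriple.mp h.triplewise⟩, fun h => ⟨h.1, htriple.mpr h.2⟩⟩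

theorem IsStirlingWord.exists_stirlingWord_eq {n : ℕ} {l : List ℕ} (hl : IsStirlingWord n l) :
    ∃ σ ∈ StirlingSet n, stirlingWord σ = l := by
  have hword : stirlingWord (fun i : Fin (2 * n) =>
      ⟨l[i]'(by rw [hl.length_eq]; exact i.2), hl.lt_succ (List.getElem_mem _)⟩) = l := by
    refine List.ext_getElem (by simp [stirlingWord, hl.length_eq]) fun i _ _ => ?_
    simp [stirlingWord]
  exact ⟨_, isStirlingWord_stirlingWord_iff.mp (hword.symm ▸ hl), hword⟩

/-- The set of Stirling permutations of order `n`, as lists of letters. -/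
def stirlingWords (n : ℕ) : Finset (List ℕ) :=
  (StirlingSet n).image stirlingWord

theorem mem_stirlingWords {n : ℕ} {l : List ℕ} : l ∈ stirlingWords n ↔ IsStirlingWord n l := by
  rw [stirlingWords, mem_image]
  exact ⟨fun ⟨_, hσ, h⟩ => h ▸ isStirlingWord_stirlingWord_iff.mpr hσ,
    fun h => h.exists_stirlingWord_eq⟩

theorem sum_stirlingWords {M : Type*} [AddCommMonoid M] (n : ℕ) (F : List ℕ → M) :
    ∑ l ∈ stirlingWords n, F l = ∑ σ ∈ StirlingSet n, F (stirlingWord σ) :=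
  sum_image (stirlingWord_injective n).injOn

theorem stirlingWords_zero : stirlingWords 0 = {[]} := by
  ext l
  rw [mem_stirlingWords, mem_singleton]
  refine ⟨fun h => List.eq_nil_of_length_eq_zero h.length_eq, ?_⟩
  rintro rfl
  exact ⟨rfl, .nil⟩

theorem sum_stirlingWords_succ {M : Type*} [AddCommMonoid M] (n : ℕ) (F : List ℕ → M) :
    ∑ l ∈ stirlingWords (n + 1), F l =
      ∑ l ∈ stirlingWords n, ∑ p ∈ range (l.length + 1), F (insertPair l p (n + 1)) := by
  rw [sum_sigma']
  symm
  refine sum_bij (fun x _ => insertPair x.1 x.2 (n + 1)) ?_ ?_ ?_ fun _ _ => rfl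
  · rintro ⟨l, p⟩ hx
    have hl := mem_stirlingWords.mp (mem_sigma.mp hx).1
    exact mem_stirlingWords.mpr
      ((isStirlingWord_insertPair_iff p fun _ => hl.lt_succ).mpr hl)
  · rintro ⟨l, p⟩ hx ⟨l', p'⟩ hx' h
    rw [mem_sigma, mem_stirlingWords, mem_range, Nat.lt_succ_iff] at hx hx'
    obtain ⟨rfl, rfl⟩ := (insertPair_inj (fun h => (hx.1.lt_succ h).false)
      (fun h => (hx'.1.lt_succ h).false) hx.2 hx'.2).mp h
    rfl
  · intro l hl
    obtain ⟨l', p, hl', hp, rfl⟩ := (mem_stirlingWords.mp hl).exists_eq_insertPair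
    exact ⟨⟨l', p⟩, mem_sigma.mpr ⟨mem_stirlingWords.mpr hl', by simpa [Nat.lt_succ_iff] using hp⟩,
      rfl⟩

end StirlingWords

section SignedPermutations

/-- The signed permutation obtained by inserting the letter `n + 1`, negated if `b` holds, at
position `p`. -/
def insertLetter {n : ℕ} (π : SignedPerm n) (p : Fin (n + 1)) (b : Bool) : SignedPerm (n + 1) :=
  (((finSuccEquiv' p).trans (Equiv.optionCongr π.1)).trans (finSuccEquiv' (Fin.last n)).symm,
    Fin.insertNth (α := fun _ => Bool) p b π.2)

theorem insertLetter_fst_self {n : ℕ} (π : SignedPerm n) (p : Fin (n + 1)) (b : Bool) :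
    (insertLetter π p b).1 p = Fin.last n := by
  simp [insertLetter]

theorem insertLetter_fst_succAbove {n : ℕ} (π : SignedPerm n) (p : Fin (n + 1)) (b : Bool)
    (j : Fin n) : (insertLetter π p b).1 (p.succAbove j) = (π.1 j).castSucc := by
  simp [insertLetter]

theorem insertLetter_snd_self {n : ℕ} (π : SignedPerm n) (p : Fin (n + 1)) (b : Bool) :
    (insertLetter π p b).2 p = b := by
  simp [insertLetter]

theorem insertLetter_snd_succAbove {n : ℕ} (π : SignedPerm n) (p : Fin (n + 1)) (b : Bool)
    (j : Fin n) : (insertLetter π p b).2 (p.succAbove j) = π.2 j := by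
  simp [insertLetter]

theorem insertLetter_bijective (n : ℕ) : Function.Bijective
    (fun x : SignedPerm n × Fin (n + 1) × Bool => insertLetter x.1 x.2.1 x.2.2) := by
  rw [Fintype.bijective_iff_injective_and_card]
  constructor
  · rintro ⟨π, p, b⟩ ⟨τ, q, c⟩ h
    dsimp only at h
    obtain rfl : p = q := by
      apply (insertLetter τ q c).1.injective
      rw [insertLetter_fst_self, ← h, insertLetter_fst_self]
    obtain rfl : b = c := by
      rw [← insertLetter_snd_self π p b, h, insertLetter_snd_self]
    have hperm : π.1 = τ.1 := by
      refine Equiv.ext fun j => Fin.castSucc_injective n ?_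
      rw [← insertLetter_fst_succAbove π p b, h, insertLetter_fst_succAbove]
    have hsign : π.2 = τ.2 := by
      funext j
      rw [← insertLetter_snd_succAbove π p b j, h, insertLetter_snd_succAbove]
    rw [Prod.ext hperm hsign]
  · simp only [Fintype.card_prod, Fintype.card_perm, Fintype.card_fin, Fintype.card_bool,
      Fintype.card_pi, Finset.prod_const, Finset.card_univ, Nat.factorial_succ, pow_succ]
    ring

theorem sum_signedPerm_succ {M : Type*} [AddCommMonoid M] (n : ℕ) (F : SignedPerm (n + 1) → M) :
    ∑ π, F π = ∑ π : SignedPerm n, ∑ p : Fin (n + 1),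
      (F (insertLetter π p false) + F (insertLetter π p true)) := by
  rw [← (insertLetter_bijective n).sum_comp F, Fintype.sum_prod_type]
  refine sum_congr rfl fun π _ => ?_
  rw [Fintype.sum_prod_type]
  exact sum_congr rfl fun p _ => by rw [Fintype.sum_bool, add_comm]

/-- The one-line notation `π(1) ⋯ π(n)` as a list. -/
def signedWord {n : ℕ} (π : SignedPerm n) : List ℤ :=
  List.ofFn fun i => if π.2 i then -((π.1 i : ℤ) + 1) else π.1 i + 1

theorem mem_Ioo_of_mem_signedWord {n : ℕ} {π : SignedPerm n} {a : ℤ} (ha : a ∈ signedWord π) :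
    a ∈ Set.Ioo (-(n + 1 : ℤ)) (n + 1) := by
  obtain ⟨i, rfl⟩ := (List.mem_ofFn' _ _).mp ha
  dsimp only
  split_ifs <;> constructor <;> omega

theorem ofFn_insertNth {α : Type*} {n : ℕ} (p : Fin (n + 1)) (a : α) (f : Fin n → α) :
    List.ofFn (p.insertNth (α := fun _ => α) a f) = (List.ofFn f).insertIdx p a := by
  have hp : (p : ℕ) ≤ (List.ofFn f).length := by simpa using Fin.is_le p
  refine List.ext_getElem (by rw [List.length_insertIdx_of_le_length hp]; simp) fun i hi hi' => ?_
  obtain ⟨j, rfl⟩ : ∃ j : Fin (n + 1), i = j := ⟨⟨i, by simpa using hi⟩, rfl⟩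
  rw [List.getElem_ofFn]
  obtain rfl | ⟨k, rfl⟩ := p.eq_self_or_eq_succAbove j
  · rw [Fin.insertNth_apply_same, List.getElem_insertIdx_self]
  rw [Fin.insertNth_apply_succAbove]
  rcases k.castSucc.lt_or_ge p with hk | hk
  · simp only [Fin.succAbove_of_castSucc_lt _ _ hk]
    rw [List.getElem_insertIdx_of_lt hk, List.getElem_ofFn]
    rfl
  · simp only [Fin.succAbove_of_le_castSucc _ _ hk]
    rw [List.getElem_insertIdx_of_gt (show (p : ℕ) < k.succ from Nat.lt_succ_of_le hk),
      List.getElem_ofFn]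
    rfl

theorem signedWord_insertLetter {n : ℕ} (π : SignedPerm n) (p : Fin (n + 1)) (b : Bool) :
    signedWord (insertLetter π p b) =
      (signedWord π).insertIdx p (if b then -((n : ℤ) + 1) else n + 1) := by
  rw [signedWord, signedWord, ← ofFn_insertNth]
  congr 1
  refine Fin.eq_insertNth_iff.mpr ⟨?_, funext fun j => ?_⟩
  · rw [insertLetter_fst_self, insertLetter_snd_self, Fin.val_last]
  · rw [Fin.removeNth, insertLetter_fst_succAbove, insertLetter_snd_succAbove, Fin.val_castSucc]

end SignedPermutations

section Iterates

open SlotLabel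

theorem slotDerivation_iterate_y (n : ℕ) :
    slotDerivation^[n] (X y) = ∑ l ∈ stirlingWords n, lapWeight 0 l := by
  induction n with
  | zero => rw [stirlingWords_zero, sum_singleton, lapWeight_nil, Function.iterate_zero_apply]
  | succ n ih =>
    rw [Function.iterate_succ_apply', ih, map_sum, sum_stirlingWords_succ]
    exact sum_congr rfl fun l hl => slotDerivation_lapWeight 0 l n.succ_pos
      fun _ => (mem_stirlingWords.mp hl).lt_succ

theorem slotDerivation_iterate_z (n : ℕ) :
    slotDerivation^[n] (X z) = ∑ l ∈ stirlingWords n, fapWeight l := by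
  induction n with
  | zero => rw [stirlingWords_zero, sum_singleton, fapWeight, Function.iterate_zero_apply]
  | succ n ih =>
    rw [Function.iterate_succ_apply', ih, map_sum, sum_stirlingWords_succ]
    exact sum_congr rfl fun l hl => slotDerivation_fapWeight l
      fun _ => (mem_stirlingWords.mp hl).lt_succ

theorem slotDerivation_iterate_z_mul_y (n : ℕ) :
    slotDerivation^[n] (X z * X y) = ∑ π : SignedPerm n, fdesWeight (signedWord π) := by
  induction n with
  | zero => simp [signedWord, fdesWeight]
  | succ n ih =>
    rw [Function.iterate_succ_apply', ih, map_sum, sum_signedPerm_succ]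
    refine sum_congr rfl fun π _ => ?_
    have h0 : (0 : ℤ) ∈ Set.Ioo (-((n : ℤ) + 1)) (n + 1) := by
      constructor <;> omega
    have hlength : (signedWord π).length = n := List.length_ofFn
    rw [slotDerivation_fdesWeight _ h0 fun _ => mem_Ioo_of_mem_signedWord, hlength, sum_range]
    simp only [signedWord_insertLetter, if_true, Bool.false_eq_true, if_false]

end Iterates

section StatisticsOfWords

theorem sval_add_one {n : ℕ} (σ : Fin (2 * n) → Fin (n + 1)) (i : Fin (2 * n)) :
    sval σ (i + 1) = σ i := by
  rw [sval, dif_pos ⟨by omega, by omega⟩]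
  rfl

theorem stirlingWord_eq_map {n : ℕ} (σ : Fin (2 * n) → Fin (n + 1)) :
    stirlingWord σ = (List.range' 1 (2 * n)).map (sval σ) := by
  refine List.ext_getElem (by simp [stirlingWord]) fun i hi _ => ?_
  have hi : i < 2 * n := by simpa [stirlingWord] using hi
  rw [List.getElem_map, List.getElem_range', one_mul, add_comm 1, sval_add_one σ ⟨i, hi⟩]
  simp [stirlingWord]

theorem bval_add_one {n : ℕ} (π : SignedPerm n) (i : Fin n) :
    bval π (i + 1) = if π.2 i then -((π.1 i : ℤ) + 1) else π.1 i + 1 := by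
  rw [bval, dif_pos ⟨by omega, by omega⟩]
  rfl

theorem signedWord_eq_map {n : ℕ} (π : SignedPerm n) :
    signedWord π = (List.range' 1 n).map (bval π) := by
  refine List.ext_getElem (by simp [signedWord]) fun i hi _ => ?_
  have hi : i < n := by simpa [signedWord] using hi
  rw [List.getElem_map, List.getElem_range', one_mul, add_comm 1, bval_add_one π ⟨i, hi⟩]
  simp [signedWord]

theorem Icc_sub_one_eq_Ico {a : ℕ} (ha : 0 < a) (b : ℕ) : Icc a (b - 1) = Ico a b := by
  ext i
  rw [Finset.mem_Icc, Finset.mem_Ico]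
  omega

theorem leftAscentPlateaus_stirlingWord {n : ℕ} (σ : Fin (2 * n) → Fin (n + 1)) :
    leftAscentPlateaus 0 (stirlingWord σ) = lapQ σ := by
  have h0 : sval σ 0 = 0 := dif_neg (by omega)
  have h := leftAscentPlateaus_map_range' (sval σ) 0 (2 * n)
  rwa [h0, zero_add, zero_add, ← stirlingWord_eq_map, ← Icc_sub_one_eq_Ico one_pos] at h

theorem evalSlots_fapWeight_stirlingWord {n : ℕ} (σ : Fin (2 * n) → Fin (n + 1)) :
    evalSlots (fapWeight (stirlingWord σ)) = Polynomial.X ^ fapQ σ := by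
  cases n with
  | zero => simp [stirlingWord, fapWeight, evalSlots_z, fapQ, apQ]
  | succ n =>
    have hword : stirlingWord σ =
        sval σ 1 :: sval σ 2 :: (List.range' 3 (2 * n)).map (sval σ) := by
      rw [stirlingWord_eq_map]
      rfl
    have hap : leftAscentPlateaus (sval σ 1) (sval σ 2 :: (List.range' 3 (2 * n)).map (sval σ)) =
        apQ σ := by
      rw [apQ, Icc_sub_one_eq_Ico two_pos, show 2 * (n + 1) = 1 + (2 * n + 1) by ring]
      exact leftAscentPlateaus_map_range' (sval σ) 1 (2 * n + 1)
    rw [hword, evalSlots_fapWeight_cons_cons, hap, fapQ]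
    simp only [Nat.le_add_left, true_and]
    split_ifs <;> rfl

theorem evalSlots_fdesWeight_signedWord {n : ℕ} (hn : 1 ≤ n) (π : SignedPerm n) :
    evalSlots (fdesWeight (signedWord π)) = Polynomial.X ^ (fdes π + 1) := by
  obtain ⟨n, rfl⟩ := Nat.exists_eq_add_of_le' hn
  have hdes : descents (bval π 1) ((List.range' 2 n).map (bval π)) = desA π :=
    (descents_map_range' (bval π) 1 n).trans
      (by rw [desA, Icc_sub_one_eq_Ico one_pos, add_comm 1 n])
  rw [signedWord_eq_map, List.range'_succ, List.map_cons, fdesWeight, map_mul, map_mul,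
    evalSlots_desWeight, hdes, evalSlots_z, one_mul, fdes]
  split_ifs
  · rw [evalSlots_x]
    ring
  · rw [evalSlots_y, one_mul]

end StatisticsOfWords

theorem statement_8 (n : ℕ) (hn : 1 ≤ n) :
    (∑ π : SignedPerm n, (Polynomial.X : Polynomial ℤ) ^ (fdes π + 1)) =
      ∑ k ∈ Finset.range (n + 1), (n.choose k : Polynomial ℤ) *
        (∑ σ ∈ StirlingSet k, (Polynomial.X : Polynomial ℤ) ^ fapQ σ) *
        (∑ σ ∈ StirlingSet (n - k), (Polynomial.X : Polynomial ℤ) ^ (2 * lapQ σ)) := by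
  have hfdes : evalSlots (slotDerivation^[n] (X .z * X .y)) =
      ∑ π : SignedPerm n, Polynomial.X ^ (fdes π + 1) := by
    simp only [slotDerivation_iterate_z_mul_y, map_sum, evalSlots_fdesWeight_signedWord hn]
  have hfap (k : ℕ) : evalSlots (slotDerivation^[k] (X .z)) =
      ∑ σ ∈ StirlingSet k, Polynomial.X ^ fapQ σ := by
    simp only [slotDerivation_iterate_z, sum_stirlingWords, map_sum,
      evalSlots_fapWeight_stirlingWord]
  have hlap (k : ℕ) : evalSlots (slotDerivation^[k] (X .y)) =
      ∑ σ ∈ StirlingSet k, Polynomial.X ^ (2 * lapQ σ) := by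
    simp only [slotDerivation_iterate_y, sum_stirlingWords, map_sum, evalSlots_lapWeight,
      leftAscentPlateaus_stirlingWord]
  rw [← hfdes, iterate_derivation_mul, map_sum, Nat.sum_antidiagonal_eq_sum_range_succ_mk]
  simp only [map_mul, map_natCast, hfap, hlap, mul_assoc]
end

section
/- Let T_m(x) = Σ_{σ ∈ Q_m} x^{fap(σ)} (a polynomial in x with integer coefficients, T_0(x) = 1). Then for every n ≥ 0, Σ_{k=0}^{n} C(n,k) · T_k(x) · T_{n−k}(−x) = δ_{0,n}, i.e. this sum equals 1 if n = 0 and equals the zero polynomial if n ≥ 1. -/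
open Finset MvPolynomial

/-- The flag ascent-plateau polynomial `T_m(x) = Σ_{σ ∈ Q_m} x^{fap(σ)}`. -/
noncomputable def Tpoly (m : ℕ) : Polynomial ℤ :=
  ∑ σ ∈ StirlingSet m, Polynomial.X ^ fapQ σ

/-!
Every Stirling permutation of order `n + 1` arises exactly once by inserting the two letters
`n + 1` side by side into one of the `2n + 1` gaps of some `σ ∈ Q_n`. If `fap(σ) = f`, then one of
these insertions produces the value `f + 1`, exactly `f` of them preserve the value `f` because they
destroy a left ascent-plateau, and the other `2n - f` produce `f + 2`. Summing over `σ` gives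
`T_{n+1} = (x + 2n x²) T_n + D T_n` with the derivation `D = x (1 - x²) d/dx`.

Since `D` commutes with `x ↦ -x`, the sequence `T_n(-x)` satisfies the same recurrence with `-x` in
place of `x`. By the Leibniz rule and Pascal's rule, the binomial convolution `c_n` of the two
sequences satisfies `c_{n+1} = 2n x² c_n + D c_n`; as `c_0 = 1`, all later terms vanish.
-/

section Insertion

variable {n : ℕ}

lemma mem_stirlingSet {σ : Fin (2 * n) → Fin (n + 1)} :
    σ ∈ StirlingSet n ↔ (∀ v ≠ 0, #{i | σ i = v} = 2) ∧
      ∀ i j k, i < j → j < k → σ i = σ k → σ i < σ j := by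
  simp [StirlingSet]

/-- The positions of a word of length `2n`, seen as positions of the word of length `2(n+1)`
obtained by inserting two letters after its first `p` letters. -/
def skipPair (p : Fin (2 * n + 1)) : Fin (2 * n) ↪o Fin (2 * (n + 1)) :=
  OrderEmbedding.ofStrictMono
    (fun i => ⟨if (i : ℕ) < p then i else i + 2, by split_ifs <;> omega⟩)
    fun i j hij => by
      simp only [Fin.lt_def] at hij ⊢
      split_ifs <;> omega

lemma val_skipPair (p : Fin (2 * n + 1)) (i : Fin (2 * n)) :
    (skipPair p i : ℕ) = if (i : ℕ) < p then (i : ℕ) else i + 2 :=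
  rfl

lemma exists_skipPair_eq_iff {p : Fin (2 * n + 1)} {i : Fin (2 * (n + 1))} :
    (∃ j, skipPair p j = i) ↔ ¬((i : ℕ) = p ∨ (i : ℕ) = p + 1) := by
  simp only [Fin.ext_iff, val_skipPair]
  constructor
  · rintro ⟨j, hj⟩
    split_ifs at hj <;> omega
  · intro hi
    rcases lt_or_ge (i : ℕ) p with h | h
    · exact ⟨⟨i, by omega⟩, if_pos h⟩
    · exact ⟨⟨i - 2, by omega⟩, by rw [if_neg] <;> simp only <;> omega⟩

/-- The word `σ` with two adjacent copies of the new largest letter `n + 1` inserted after its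
first `p` letters; every Stirling permutation of order `n + 1` arises this way. -/
def insertMax (σ : Fin (2 * n) → Fin (n + 1)) (p : Fin (2 * n + 1)) :
    Fin (2 * (n + 1)) → Fin (n + 1 + 1) := fun i =>
  if h : (i : ℕ) < p then (σ ⟨i, by omega⟩).castSucc
  else if h' : (i : ℕ) < p + 2 then Fin.last (n + 1)
  else (σ ⟨i - 2, by omega⟩).castSucc

variable (σ : Fin (2 * n) → Fin (n + 1)) (p : Fin (2 * n + 1))

lemma insertMax_skipPair (i : Fin (2 * n)) : insertMax σ p (skipPair p i) = (σ i).castSucc := by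
  by_cases h : (i : ℕ) < p
  · simp [insertMax, val_skipPair, h]
  · simp [insertMax, val_skipPair, h, show ¬(i : ℕ) + 2 < p by omega]

variable {σ p}

lemma insertMax_eq_last {i : Fin (2 * (n + 1))} (hi : (i : ℕ) = p ∨ (i : ℕ) = p + 1) :
    insertMax σ p i = Fin.last (n + 1) := by
  rw [insertMax, dif_neg (by omega), dif_pos (by omega)]

lemma insertMax_eq_last_iff {i : Fin (2 * (n + 1))} :
    insertMax σ p i = Fin.last (n + 1) ↔ (i : ℕ) = p ∨ (i : ℕ) = p + 1 := by
  refine ⟨fun h => not_not.1 fun hi => ?_, insertMax_eq_last⟩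
  obtain ⟨j, rfl⟩ := exists_skipPair_eq_iff.2 hi
  exact (Fin.castSucc_lt_last _).ne (insertMax_skipPair σ p j ▸ h)

lemma insertMax_eq_castSucc_iff {v : Fin (n + 1)} {i : Fin (2 * (n + 1))} :
    insertMax σ p i = v.castSucc ↔ ∃ j, σ j = v ∧ skipPair p j = i := by
  refine ⟨fun h => ?_, ?_⟩
  · obtain ⟨j, rfl⟩ := exists_skipPair_eq_iff.2 fun hi =>
      (Fin.castSucc_lt_last v).ne (h.symm.trans (insertMax_eq_last hi))
    exact ⟨j, Fin.castSucc_injective _ ((insertMax_skipPair σ p j).symm.trans h), rfl⟩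
  · rintro ⟨j, rfl, rfl⟩
    exact insertMax_skipPair σ p j

variable (σ p)

lemma card_filter_insertMax_eq_castSucc (v : Fin (n + 1)) :
    #{i | insertMax σ p i = v.castSucc} = #{i | σ i = v} := by
  rw [← card_map (skipPair p).toEmbedding]
  congr 1
  ext i
  simp [insertMax_eq_castSucc_iff]

lemma card_filter_insertMax_eq_last : #{i | insertMax σ p i = Fin.last (n + 1)} = 2 := by
  have h : ({i | insertMax σ p i = Fin.last (n + 1)} : Finset (Fin (2 * (n + 1)))) =
      {⟨p, by omega⟩, ⟨p + 1, by omega⟩} := by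
    ext i
    rw [mem_filter_univ, insertMax_eq_last_iff]
    simp [Fin.ext_iff]
  rw [h, card_pair (by simp)]

lemma insertMax_mem_stirlingSet_iff : insertMax σ p ∈ StirlingSet (n + 1) ↔ σ ∈ StirlingSet n := by
  simp only [mem_stirlingSet]
  refine and_congr ⟨fun h v hv => ?_, fun h v hv => ?_⟩
    ⟨fun h i j k hij hjk hik => ?_, fun h i j k hij hjk hik => ?_⟩
  · rw [← card_filter_insertMax_eq_castSucc σ p]
    exact h _ (by simpa using hv)
  · induction v using Fin.lastCases with
    | last => exact card_filter_insertMax_eq_last σ p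
    | cast v =>
      rw [card_filter_insertMax_eq_castSucc]
      exact h v (by simpa using hv)
  · simpa [insertMax_skipPair, hij, hjk, hik] using
      h (skipPair p i) (skipPair p j) (skipPair p k)
  · induction hv : insertMax σ p i using Fin.lastCases with
    | last =>
      have hi := insertMax_eq_last_iff.1 hv
      have hk := insertMax_eq_last_iff.1 (hik ▸ hv)
      rw [Fin.lt_def] at hij hjk
      omega
    | cast v =>
      obtain ⟨i, rfl, rfl⟩ := insertMax_eq_castSucc_iff.1 hv
      obtain ⟨k, hk, rfl⟩ := insertMax_eq_castSucc_iff.1 (hik ▸ hv)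
      induction hw : insertMax σ p j using Fin.lastCases with
      | last => exact Fin.castSucc_lt_last _
      | cast w =>
        obtain ⟨j, rfl, rfl⟩ := insertMax_eq_castSucc_iff.1 hw
        rw [OrderEmbedding.lt_iff_lt] at hij hjk
        exact Fin.castSucc_lt_castSucc_iff.2 (h i j k hij hjk hk.symm)

lemma insertMax_injective2 : Function.Injective2 (insertMax (n := n)) := by
  intro σ τ p q h
  have hpos (i : Fin (2 * (n + 1))) :
      (i : ℕ) = p ∨ (i : ℕ) = p + 1 ↔ (i : ℕ) = q ∨ (i : ℕ) = q + 1 := by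
    rw [← insertMax_eq_last_iff (σ := σ), h, insertMax_eq_last_iff]
  obtain rfl : p = q := by
    have hp := (hpos ⟨p, by omega⟩).1 (Or.inl rfl)
    have hq := (hpos ⟨q, by omega⟩).2 (Or.inl rfl)
    simp only at hp hq
    omega
  refine ⟨funext fun i => Fin.castSucc_injective _ ?_, rfl⟩
  rw [← insertMax_skipPair σ p, h, insertMax_skipPair]

variable {σ p} {τ : Fin (2 * (n + 1)) → Fin (n + 1 + 1)}

lemma exists_forall_eq_last_iff (hτ : τ ∈ StirlingSet (n + 1)) :
    ∃ p : Fin (2 * n + 1), ∀ i, τ i = Fin.last (n + 1) ↔ (i : ℕ) = p ∨ (i : ℕ) = p + 1 := by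
  obtain ⟨hcard, hbetween⟩ := mem_stirlingSet.1 hτ
  obtain ⟨a, b, hab, hlast⟩ : ∃ a b, a < b ∧ ∀ i, τ i = Fin.last (n + 1) ↔ i = a ∨ i = b := by
    obtain ⟨a, b, hne, h⟩ := card_eq_two.1 (hcard (Fin.last (n + 1)) (Fin.last_pos.ne'))
    have hmem (i) : τ i = Fin.last (n + 1) ↔ i = a ∨ i = b := by simpa using Finset.ext_iff.1 h i
    rcases hne.lt_or_gt with hlt | hlt
    · exact ⟨a, b, hlt, hmem⟩
    · exact ⟨b, a, hlt, fun i => (hmem i).trans or_comm⟩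
  have ha := (hlast a).2 (Or.inl rfl)
  have hb := (hlast b).2 (Or.inr rfl)
  -- A letter strictly between the two occurrences of `n + 1` would have to exceed `n + 1`.
  have hsucc : (b : ℕ) = a + 1 := by
    rw [Fin.lt_def] at hab
    by_contra hne
    have := hbetween a ⟨a + 1, by omega⟩ b (Fin.lt_def.2 (by simp))
      (Fin.lt_def.2 (by simp only; omega)) (ha.trans hb.symm)
    exact (Fin.le_last _).not_gt (ha ▸ this)
  refine ⟨⟨a, by omega⟩, fun i => ?_⟩
  rw [hlast, Fin.ext_iff, Fin.ext_iff, hsucc]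

lemma exists_insertMax_eq (hτ : τ ∈ StirlingSet (n + 1)) : ∃ σ p, insertMax σ p = τ := by
  obtain ⟨p, hp⟩ := exists_forall_eq_last_iff hτ
  have hne (j : Fin (2 * n)) : τ (skipPair p j) ≠ Fin.last (n + 1) :=
    mt (hp _).1 (exists_skipPair_eq_iff.1 ⟨j, rfl⟩)
  refine ⟨fun j => (τ (skipPair p j)).castPred (hne j), p, funext fun i => ?_⟩
  by_cases hi : (i : ℕ) = p ∨ (i : ℕ) = p + 1
  · rw [insertMax_eq_last hi, (hp i).2 hi]
  · obtain ⟨j, rfl⟩ := exists_skipPair_eq_iff.2 hi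
    rw [insertMax_skipPair, Fin.castSucc_castPred]

lemma sum_stirlingSet_succ {M : Type*} [AddCommMonoid M]
    (f : (Fin (2 * (n + 1)) → Fin (n + 1 + 1)) → M) :
    ∑ τ ∈ StirlingSet (n + 1), f τ = ∑ σ ∈ StirlingSet n, ∑ p, f (insertMax σ p) := by
  rw [← sum_product', eq_comm]
  refine sum_nbij (Function.uncurry insertMax) ?_ insertMax_injective2.uncurry.injOn ?_
    fun _ _ => rfl
  · rintro ⟨σ, p⟩ h
    exact (insertMax_mem_stirlingSet_iff σ p).2 (mem_product.1 h).1
  · intro τ hτ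
    obtain ⟨σ, p, rfl⟩ := exists_insertMax_eq hτ
    exact ⟨(σ, p), by simpa using (insertMax_mem_stirlingSet_iff σ p).1 hτ, rfl⟩

end Insertion

section Letters

variable {n : ℕ} {σ : Fin (2 * n) → Fin (n + 1)} {i : ℕ}

lemma ne_zero_of_mem_stirlingSet (hσ : σ ∈ StirlingSet n) (i : Fin (2 * n)) : σ i ≠ 0 := by
  have hcount : 2 * n = #{i | σ i = 0} + n * 2 := by
    have h := card_eq_sum_card_fiberwise (f := σ) (s := univ) (t := univ) fun _ _ => by simp
    rw [Fin.sum_univ_succ, sum_congr rfl fun v _ => (mem_stirlingSet.1 hσ).1 v.succ v.succ_ne_zero]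
      at h
    simpa using h
  have hzero : #{i | σ i = 0} = 0 := by omega
  simpa using filter_eq_empty_iff.1 (card_eq_zero.1 hzero) (mem_univ i)

lemma sval_eq_zero (hi : i = 0 ∨ 2 * n < i) : sval σ i = 0 :=
  dif_neg (by omega)

lemma sval_pos (hσ : σ ∈ StirlingSet n) (h₁ : 1 ≤ i) (h₂ : i ≤ 2 * n) : 0 < sval σ i := by
  rw [sval, dif_pos ⟨h₁, h₂⟩]
  exact Fin.pos_of_ne_zero (ne_zero_of_mem_stirlingSet hσ _)

variable (σ i)

lemma sval_le : sval σ i ≤ n := by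
  unfold sval
  split_ifs
  · exact Fin.is_le _
  · exact Nat.zero_le n

lemma sval_insertMax (p : Fin (2 * n + 1)) :
    sval (insertMax σ p) i =
      if i ≤ p then sval σ i else if i ≤ p + 2 then n + 1 else sval σ (i - 2) := by
  by_cases hi : 1 ≤ i ∧ i ≤ 2 * (n + 1)
  · rw [sval, dif_pos hi, insertMax]
    simp only [sval]
    split_ifs <;> first | rfl | omega
  · rw [sval_eq_zero (by omega)]
    split_ifs <;> first | exact (sval_eq_zero (by omega)).symm | omega

end Letters

section LeftAscentPlateaus

variable {n : ℕ} (σ : Fin (2 * n) → Fin (n + 1))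

/-- The set of left ascent-plateaus of `σ`, whose cardinality is `lapQ σ`. -/
def lapSet : Finset ℕ :=
  {i ∈ Icc 1 (2 * n - 1) | sval σ (i - 1) < sval σ i ∧ sval σ i = sval σ (i + 1)}

/-- The gaps `i - 1` and `i` for each left ascent-plateau `i` of `σ`, gap `p` lying between
positions `p` and `p + 1`: inserting a pair of larger letters into one of these gaps, and into no
other, destroys a left ascent-plateau. -/
def lapGaps : Finset ℕ :=
  lapSet σ ∪ (lapSet σ).image (· - 1)

/-- The gap of `σ` into which inserting a pair of larger letters raises the flag ascent-plateau
number by exactly one. -/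
def flagGap : ℕ :=
  if 1 ∈ lapSet σ then 1 else 0

variable {σ} {i p : ℕ}

lemma mem_lapSet : i ∈ lapSet σ ↔ sval σ (i - 1) < sval σ i ∧ sval σ i = sval σ (i + 1) := by
  refine ⟨fun h => (mem_filter.1 h).2, fun h => mem_filter.2 ⟨mem_Icc.2 ?_, h⟩⟩
  have hlow : i ≠ 0 := by
    rintro rfl
    exact h.1.false
  have hhigh : i + 1 ≤ 2 * n := by
    by_contra hi
    have := sval_eq_zero (σ := σ) (i := i + 1) (by omega)
    omega
  omega

lemma one_le_and_le_of_mem_lapSet (hi : i ∈ lapSet σ) : 1 ≤ i ∧ i ≤ 2 * n - 1 :=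
  mem_Icc.1 (mem_filter.1 hi).1

lemma succ_notMem_lapSet (hi : i ∈ lapSet σ) : i + 1 ∉ lapSet σ := fun h =>
  (mem_lapSet.1 h).1.ne (mem_lapSet.1 hi).2

lemma mem_lapGaps : p ∈ lapGaps σ ↔ p ∈ lapSet σ ∨ p + 1 ∈ lapSet σ := by
  simp only [lapGaps, mem_union, mem_image]
  refine or_congr_right ⟨?_, fun h => ⟨p + 1, h, rfl⟩⟩
  rintro ⟨i, hi, rfl⟩
  rwa [Nat.sub_add_cancel (one_le_and_le_of_mem_lapSet hi).1]

lemma lapGaps_subset_range : lapGaps σ ⊆ range (2 * n + 1) := fun p hp => by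
  rw [mem_range]
  rcases mem_lapGaps.1 hp with h | h <;> have := one_le_and_le_of_mem_lapSet h <;> omega

lemma flagGap_mem_range : flagGap σ ∈ range (2 * n + 1) := by
  rw [mem_range, flagGap]
  split_ifs with h
  · have := one_le_and_le_of_mem_lapSet h
    omega
  · omega

lemma flagGap_mem_lapGaps_iff : flagGap σ ∈ lapGaps σ ↔ 1 ∈ lapSet σ := by
  rw [mem_lapGaps, flagGap]
  split_ifs with h
  · simp [h]
  · simpa [h] using fun h₀ => absurd (one_le_and_le_of_mem_lapSet h₀).1 (by omega)

variable (σ p)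

lemma card_lapGaps : #(lapGaps σ) = 2 * #(lapSet σ) := by
  have hinj : Set.InjOn (· - 1) (lapSet σ : Set ℕ) := fun i hi j hj hij => by
    have := one_le_and_le_of_mem_lapSet hi
    have := one_le_and_le_of_mem_lapSet hj
    simp only at hij
    omega
  have hdisj : Disjoint (lapSet σ) ((lapSet σ).image (· - 1)) := by
    refine disjoint_right.2 fun p hp => ?_
    obtain ⟨i, hi, rfl⟩ := mem_image.1 hp
    intro h
    refine succ_notMem_lapSet h ?_
    rwa [Nat.sub_add_cancel (one_le_and_le_of_mem_lapSet hi).1]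
  rw [lapGaps, card_union_of_disjoint hdisj, card_image_of_injOn hinj, two_mul]

lemma card_lapSet_sdiff_pair_add :
    #(lapSet σ \ {p, p + 1}) + (if p ∈ lapGaps σ then 1 else 0) = #(lapSet σ) := by
  rw [← card_sdiff_add_card_inter (lapSet σ) {p, p + 1}]
  congr 1
  by_cases h : p ∈ lapSet σ
  · simp [mem_lapGaps, h, succ_notMem_lapSet h]
  · by_cases h' : p + 1 ∈ lapSet σ <;> simp [mem_lapGaps, h, h']

lemma apQ_eq_card_erase : apQ σ = #((lapSet σ).erase 1) := by
  unfold apQ lapSet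
  congr 1
  ext i
  simp only [mem_erase, mem_filter, mem_Icc]
  omega

variable {σ}

lemma one_mem_lapSet_iff (hσ : σ ∈ StirlingSet n) :
    1 ∈ lapSet σ ↔ 1 ≤ n ∧ sval σ 1 = sval σ 2 := by
  refine ⟨fun h => ⟨?_, (mem_lapSet.1 h).2⟩, fun h => mem_lapSet.2 ⟨?_, h.2⟩⟩
  · have := one_le_and_le_of_mem_lapSet h
    omega
  · rw [sval_eq_zero (i := 1 - 1) (Or.inl rfl)]
    exact sval_pos hσ le_rfl (by omega)

lemma fapQ_add_flagGap (hσ : σ ∈ StirlingSet n) : fapQ σ + flagGap σ = 2 * #(lapSet σ) := by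
  simp only [fapQ, ← one_mem_lapSet_iff hσ, apQ_eq_card_erase, flagGap]
  split_ifs with h
  · rw [← card_erase_add_one h]
    ring
  · rw [erase_eq_of_notMem h, add_zero]

lemma card_lapGaps_erase_flagGap (hσ : σ ∈ StirlingSet n) :
    #((lapGaps σ).erase (flagGap σ)) = fapQ σ := by
  have hfap := fapQ_add_flagGap hσ
  have hmem := flagGap_mem_lapGaps_iff (σ := σ)
  by_cases h : 1 ∈ lapSet σ
  · rw [card_erase_of_mem (hmem.2 h), card_lapGaps, ← hfap, flagGap, if_pos h, Nat.add_sub_cancel]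
  · rw [erase_eq_of_notMem (mt hmem.1 h), card_lapGaps, ← hfap, flagGap, if_neg h, add_zero]

end LeftAscentPlateaus

section InsertionStatistics

variable {n : ℕ} (σ : Fin (2 * n) → Fin (n + 1)) (p : Fin (2 * n + 1))

lemma mem_lapSet_insertMax {i : ℕ} :
    i ∈ lapSet (insertMax σ p) ↔
      i < p ∧ i ∈ lapSet σ ∨ i = p + 1 ∨ p + 4 ≤ i ∧ i - 2 ∈ lapSet σ := by
  simp only [mem_lapSet, sval_insertMax]
  have hp := sval_le σ p
  have hp' := sval_le σ (p + 1)
  rcases lt_or_ge i p with h | h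
  · simp only [show i - 1 ≤ p by omega, h.le, show i + 1 ≤ p by omega, if_true]
    omega
  rcases lt_or_ge i (p + 4) with h' | h'
  · obtain rfl | rfl | rfl | rfl : i = p ∨ i = p + 1 ∨ i = p + 2 ∨ i = p + 3 := by omega
    all_goals simp
    all_goals omega
  · simp only [show ¬i - 1 ≤ p by omega, show ¬i - 1 ≤ p + 2 by omega, show ¬i ≤ p by omega,
      show ¬i ≤ p + 2 by omega, show ¬i + 1 ≤ p by omega, show ¬i + 1 ≤ p + 2 by omega, if_false]
    rw [show i - 1 - 2 = i - 2 - 1 by omega, show i + 1 - 2 = i - 2 + 1 by omega]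
    omega

lemma lapSet_insertMax :
    lapSet (insertMax σ p) =
      insert (p + 1 : ℕ)
        ((lapSet σ \ {(p : ℕ), (p + 1 : ℕ)}).image fun i : ℕ => if i < p then i else i + 2) := by
  ext i
  simp only [mem_lapSet_insertMax, mem_insert, mem_image, mem_sdiff, mem_singleton]
  constructor
  · rintro (⟨hip, hi⟩ | rfl | ⟨hip, hi⟩)
    · exact Or.inr ⟨i, ⟨hi, by omega⟩, if_pos hip⟩
    · exact Or.inl rfl
    · exact Or.inr ⟨i - 2, ⟨hi, by omega⟩, by rw [if_neg (by omega)]; omega⟩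
  · rintro (rfl | ⟨j, ⟨hj, hjp⟩, rfl⟩)
    · exact Or.inr (Or.inl rfl)
    · split_ifs with h
      · exact Or.inl ⟨h, hj⟩
      · exact Or.inr (Or.inr ⟨by omega, hj⟩)

lemma card_lapSet_insertMax :
    #(lapSet (insertMax σ p)) = #(lapSet σ \ {(p : ℕ), (p + 1 : ℕ)}) + 1 := by
  have hinj : Function.Injective fun i : ℕ => if i < p then i else i + 2 := fun i j h => by
    simp only at h
    split_ifs at h <;> omega
  rw [lapSet_insertMax, card_insert_of_notMem, card_image_of_injective _ hinj]
  intro h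
  obtain ⟨i, -, hip⟩ := mem_image.1 h
  split_ifs at hip <;> omega

lemma flagGap_insertMax :
    flagGap (insertMax σ p) = if (p : ℕ) = 0 ∨ 2 ≤ (p : ℕ) ∧ 1 ∈ lapSet σ then 1 else 0 := by
  refine if_congr ?_ rfl rfl
  rw [mem_lapSet_insertMax]
  grind

variable {σ}

lemma fapQ_insertMax (hσ : σ ∈ StirlingSet n) :
    fapQ (insertMax σ p) =
      if (p : ℕ) = flagGap σ then fapQ σ + 1
      else if (p : ℕ) ∈ lapGaps σ then fapQ σ else fapQ σ + 2 := by
  have hfap := fapQ_add_flagGap hσ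
  have hfap' := fapQ_add_flagGap ((insertMax_mem_stirlingSet_iff σ p).2 hσ)
  have hfirst : (p : ℕ) ≤ 1 → 1 ∈ lapSet σ → (p : ℕ) ∈ lapGaps σ := fun hp h => by
    rw [mem_lapGaps]
    interval_cases (p : ℕ) <;> simp [h]
  have hflag : (p : ℕ) = flagGap σ → ((p : ℕ) ∈ lapGaps σ ↔ 1 ∈ lapSet σ) := fun h =>
    h ▸ flagGap_mem_lapGaps_iff
  have hcount : fapQ (insertMax σ p) + flagGap (insertMax σ p) +
      2 * (if (p : ℕ) ∈ lapGaps σ then 1 else 0) = fapQ σ + flagGap σ + 2 := by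
    rw [hfap', hfap, card_lapSet_insertMax, ← card_lapSet_sdiff_pair_add σ p]
    ring
  rw [flagGap_insertMax] at hcount
  unfold flagGap at *
  grind

lemma fapQ_le (hσ : σ ∈ StirlingSet n) : fapQ σ ≤ 2 * n := by
  have h := card_le_card (erase_subset_erase (flagGap σ) (lapGaps_subset_range (σ := σ)))
  rwa [card_lapGaps_erase_flagGap hσ, card_erase_of_mem flagGap_mem_range, card_range,
    Nat.add_sub_cancel] at h

lemma sum_fapQ_insertMax {M : Type*} [AddCommMonoid M] (g : ℕ → M) (hσ : σ ∈ StirlingSet n) :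
    ∑ p, g (fapQ (insertMax σ p)) =
      g (fapQ σ + 1) + fapQ σ • g (fapQ σ) + (2 * n - fapQ σ) • g (fapQ σ + 2) := by
  set f := fapQ σ
  set gaps := (range (2 * n + 1)).erase (flagGap σ)
  have hcard : #gaps = 2 * n := by
    rw [card_erase_of_mem flagGap_mem_range, card_range, Nat.add_sub_cancel]
  have hfilter : gaps.filter (· ∈ lapGaps σ) = (lapGaps σ).erase (flagGap σ) := by
    rw [filter_mem_eq_inter, erase_inter, inter_eq_right.2 lapGaps_subset_range]
  have hlap : #{p ∈ gaps | p ∈ lapGaps σ} = f := by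
    rw [hfilter, card_lapGaps_erase_flagGap hσ]
  have hfree : #{p ∈ gaps | p ∉ lapGaps σ} = 2 * n - f := by
    rw [← hcard, ← card_filter_add_card_filter_not (s := gaps) (· ∈ lapGaps σ), hlap,
      Nat.add_sub_cancel_left]
  calc ∑ p, g (fapQ (insertMax σ p))
      = ∑ p ∈ range (2 * n + 1), g (if p = flagGap σ then f + 1
          else if p ∈ lapGaps σ then f else f + 2) := by
        rw [← Fin.sum_univ_eq_sum_range]
        exact sum_congr rfl fun p _ => by rw [fapQ_insertMax p hσ]
    _ = g (f + 1) + ∑ p ∈ gaps, if p ∈ lapGaps σ then g f else g (f + 2) := by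
        rw [← add_sum_erase _ _ flagGap_mem_range, if_pos rfl]
        congr 1
        exact sum_congr rfl fun p hp => by rw [if_neg (ne_of_mem_erase hp), apply_ite g]
    _ = g (f + 1) + f • g f + (2 * n - f) • g (f + 2) := by
        rw [sum_ite, sum_const, sum_const, hlap, hfree, add_assoc]

end InsertionStatistics

section Polynomials

lemma Tpoly_zero : Tpoly 0 = 1 := by
  have h : StirlingSet 0 = univ := eq_univ_of_forall fun σ =>
    mem_stirlingSet.2 ⟨fun v hv => absurd (Fin.fin_one_eq_zero v) hv, fun i => i.elim0⟩
  simp [Tpoly, h, fapQ, apQ]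

/-- The derivation `x (1 - x²) d/dx` occurring in the recurrence of the flag ascent-plateau
polynomials. -/
noncomputable def fapDerivation : Derivation ℤ (Polynomial ℤ) (Polynomial ℤ) :=
  (Polynomial.X * (1 - Polynomial.X ^ 2) : Polynomial ℤ) • Polynomial.derivative'

lemma fapDerivation_apply (P : Polynomial ℤ) : fapDerivation P =
    Polynomial.X * (1 - Polynomial.X ^ 2) * Polynomial.derivative P :=
  rfl

lemma fapDerivation_comp_neg_X (P : Polynomial ℤ) :
    fapDerivation (P.comp (-Polynomial.X)) = (fapDerivation P).comp (-Polynomial.X) := by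
  simp [fapDerivation_apply, Polynomial.derivative_comp]

lemma Tpoly_succ (n : ℕ) :
    Tpoly (n + 1) =
      (Polynomial.X + (n : Polynomial ℤ) * (2 * Polynomial.X ^ 2)) * Tpoly n +
        fapDerivation (Tpoly n) := by
  simp only [Tpoly, sum_stirlingSet_succ, map_sum, mul_sum, ← sum_add_distrib]
  refine sum_congr rfl fun σ hσ => ?_
  rw [sum_fapQ_insertMax (Polynomial.X ^ ·) hσ, fapDerivation_apply, Polynomial.derivative_X_pow]
  simp only [nsmul_eq_mul, Nat.cast_sub (fapQ_le hσ)]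
  cases fapQ σ with
  | zero => simp; ring
  | succ f => simp; ring

lemma Tpoly_succ_comp_neg_X (n : ℕ) :
    (Tpoly (n + 1)).comp (-Polynomial.X) =
      (-Polynomial.X + (n : Polynomial ℤ) * (2 * Polynomial.X ^ 2)) *
          (Tpoly n).comp (-Polynomial.X) +
        fapDerivation ((Tpoly n).comp (-Polynomial.X)) := by
  rw [Tpoly_succ, fapDerivation_comp_neg_X]
  simp

/-- The coefficients of the product of the exponential generating functions of `a` and `b`. -/
def binomialConv {R : Type*} [CommSemiring R] (a b : ℕ → R) (n : ℕ) : R :=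
  ∑ k ∈ range (n + 1), n.choose k * a k * b (n - k)

lemma binomialConv_succ {S R : Type*} [CommSemiring S] [CommSemiring R] [Algebra S R]
    (D : Derivation S R R) {a b : ℕ → R} {r s t : R}
    (ha : ∀ n, a (n + 1) = (r + n * t) * a n + D (a n))
    (hb : ∀ n, b (n + 1) = (s + n * t) * b n + D (b n)) (n : ℕ) :
    binomialConv a b (n + 1) =
      (r + s + n * t) * binomialConv a b n + D (binomialConv a b n) := by
  have hpascal := sum_choose_succ_mul (fun i j => a i * b j) n
  simp only [← mul_assoc] at hpascal
  simp only [binomialConv, hpascal, map_sum, mul_sum, ← sum_add_distrib]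
  refine sum_congr rfl fun k hk => ?_
  obtain ⟨j, rfl⟩ := Nat.exists_eq_add_of_le (mem_range_succ_iff.1 hk)
  rw [Nat.succ_sub (Nat.le_add_right k j), Nat.add_sub_cancel_left, ha, hb, Nat.cast_add]
  simp only [Derivation.leibniz, Derivation.map_natCast, smul_eq_mul]
  ring

end Polynomials

theorem statement_9 (n : ℕ) :
    (∑ k ∈ Finset.range (n + 1),
        (n.choose k : Polynomial ℤ) * Tpoly k * ((Tpoly (n - k)).comp (-Polynomial.X))) =
      if n = 0 then 1 else 0 := by
  change binomialConv Tpoly (fun m => (Tpoly m).comp (-Polynomial.X)) n = _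
  induction n with
  | zero => simp [binomialConv, Tpoly_zero]
  | succ n ih =>
    rw [binomialConv_succ fapDerivation Tpoly_succ Tpoly_succ_comp_neg_X, ih]
    rcases n with _ | n <;> simp
end
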